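/- For every finite simple graph G on n vertices with m edges, vsrc(G) ≤ min{⌊n²/4⌋, m}. -/

import Mathlib

open SimpleGraph

/-- A very strong rainbow coloring: for every shortest path (a path whose length equals the
distance between its endpoints), all edges receive pairwise distinct colors. -/
def IsVSRC {V : Type*} (G : SimpleGraph V) (c : Sym2 V → ℕ) : Prop :=
  ∀ (u v : V) (p : G.Walk u v), p.IsPath → p.length = G.dist u v →
    (p.edges.map c).Nodup

/-!
A shortest path contains at most one edge of any clique, so coloring every edge by a clique that
contains it gives a very strong rainbow coloring: the number of cliques needed to cover the edges
of `G` bounds `vsrc(G)`. The `m` edges themselves form such a cover. By Erdős, Goodman and Pósa,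
`⌊n² / 4⌋` cliques also suffice: remove the ends of an edge `uv` and cover the rest inductively;
then `{u, v}` and, for each of the other `n - 2` vertices `w`, the clique formed by `w` and its
neighbors in `{u, v}` cover the remaining edges, and `⌊(n - 2)² / 4⌋ + (n - 2) + 1 = ⌊n² / 4⌋`.
-/

section

variable {V : Type*} {G : SimpleGraph V}

lemma dist_getVert_getVert_of_length_eq_dist {u v : V} {p : G.Walk u v}
    (hp : p.length = G.dist u v) {i j : ℕ} (hij : i ≤ j) (hj : j ≤ p.length) :
    G.dist (p.getVert i) (p.getVert j) = j - i := by
  have hsub : ((p.take j).drop i).IsSubwalk p :=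
    (Walk.isSubwalk_drop _ i).trans (p.isSubwalk_take j)
  have hlen := length_eq_dist_of_subwalk hp hsub
  rw [Walk.drop_length, Walk.take_length, Walk.take_getVert, min_eq_right hij,
    min_eq_left hj] at hlen
  exact hlen.symm

lemma dist_le_one_of_isClique {K : Set V} (hK : G.IsClique K) {a b : V} (ha : a ∈ K)
    (hb : b ∈ K) : G.dist a b ≤ 1 := by
  obtain rfl | hab := eq_or_ne a b
  · simp
  · exact (dist_eq_one_iff_adj.2 (hK ha hb hab)).le

lemma isClique_of_mem_edgeSet {e : Sym2 V} (he : e ∈ G.edgeSet) : G.IsClique (e : Set V) := by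
  induction e with
  | _ a b => simpa only [Sym2.coe_mk, isClique_pair] using fun _ => (mem_edgeSet G).1 he

lemma isClique_insert_inter_neighborSet {K : Set V} (hK : G.IsClique K) (w : V) :
    G.IsClique (insert w (K ∩ G.neighborSet w)) :=
  (hK.inter_left _).insert fun _ hb _ => hb.2

lemma pairwise_edges_not_subset_of_isClique {u v : V} {p : G.Walk u v}
    (hp : p.length = G.dist u v) :
    p.edges.Pairwise fun (e f : Sym2 V) =>
      ∀ K : Set V, G.IsClique K → (e : Set V) ⊆ K → ¬ (f : Set V) ⊆ K := by
  rw [List.pairwise_iff_getElem]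
  intro i j hi hj hij K hK hei hej
  rw [Walk.length_edges] at hi hj
  rw [Walk.getElem_edges_eq_edge_getElem_darts, Walk.darts_getElem_eq_getVert] at hei hej
  have hfst : p.getVert i ∈ K := hei (by simp [Dart.edge])
  have hsnd : p.getVert (j + 1) ∈ K := hej (by simp [Dart.edge])
  have hdist := dist_getVert_getVert_of_length_eq_dist hp (i := i) (j := j + 1) (by omega) hj
  have hle := dist_le_one_of_isClique hK hfst hsnd
  omega

lemma isVSRC_of_exists_isClique {c : Sym2 V → ℕ}
    (hc : ∀ e ∈ G.edgeSet, ∀ f ∈ G.edgeSet, c e = c f →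
      ∃ K, G.IsClique K ∧ (e : Set V) ⊆ K ∧ (f : Set V) ⊆ K) :
    IsVSRC G c := by
  intro u v p _ hp
  refine List.pairwise_map.2 ((pairwise_edges_not_subset_of_isClique hp).imp_of_mem ?_)
  intro e f he hf hef hcef
  obtain ⟨K, hK, heK, hfK⟩ :=
    hc e (p.edges_subset_edgeSet he) f (p.edges_subset_edgeSet hf) hcef
  exact hef K hK heK hfK

/-- An edge clique cover of the part of `G` inside `s`: a finite family of cliques such that every
edge with both ends in `s` lies in one of them. The cliques need not lie inside `s`, and taking
`s = Set.univ` gives the edge clique covers of `G`. -/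
structure IsEdgeCliqueCover (G : SimpleGraph V) (s : Set V) (𝒞 : Finset (Set V)) : Prop where
  isClique : ∀ K ∈ 𝒞, G.IsClique K
  exists_superset : ∀ e ∈ G.edgeSet, (e : Set V) ⊆ s → ∃ K ∈ 𝒞, (e : Set V) ⊆ K

lemma IsEdgeCliqueCover.exists_isVSRC {𝒞 : Finset (Set V)}
    (h𝒞 : IsEdgeCliqueCover G Set.univ 𝒞) :
    ∃ c : Sym2 V → ℕ, IsVSRC G c ∧ ∀ e ∈ G.edgeSet, c e < 𝒞.card := by
  classical
  choose! K hK𝒞 heK using fun e he => h𝒞.exists_superset e he (Set.subset_univ _)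
  have hKlist : ∀ e ∈ G.edgeSet, K e ∈ 𝒞.toList := fun e he => Finset.mem_toList.2 (hK𝒞 e he)
  refine ⟨fun e => 𝒞.toList.idxOf (K e), isVSRC_of_exists_isClique ?_, fun e he => ?_⟩
  · intro e he f hf hef
    have hKeq : K e = K f := (List.idxOf_inj (hKlist e he)).1 hef
    exact ⟨K e, h𝒞.isClique _ (hK𝒞 e he), heK e he, hKeq ▸ heK f hf⟩
  · exact (List.idxOf_lt_length_of_mem (hKlist e he)).trans_eq 𝒞.length_toList

lemma exists_isEdgeCliqueCover_card_le_card_edgeFinset (G : SimpleGraph V) [Fintype G.edgeSet] :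
    ∃ 𝒞, IsEdgeCliqueCover G Set.univ 𝒞 ∧ 𝒞.card ≤ G.edgeFinset.card := by
  classical
  refine ⟨G.edgeFinset.image (↑), ⟨?_, fun e he _ => ?_⟩, Finset.card_image_le⟩
  · exact Finset.forall_mem_image.2 fun e he => isClique_of_mem_edgeSet (mem_edgeFinset.1 he)
  · exact ⟨e, Finset.mem_image_of_mem _ (mem_edgeFinset.2 he), subset_rfl⟩

lemma IsEdgeCliqueCover.exists_union_of_isClique {t : Finset V} {𝒞 : Finset (Set V)}
    (h𝒞 : IsEdgeCliqueCover G t 𝒞) {K : Set V} (hK : G.IsClique K) :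
    ∃ 𝒟, IsEdgeCliqueCover G (t ∪ K) 𝒟 ∧ 𝒟.card ≤ 𝒞.card + t.card + 1 := by
  classical
  let nbrClique (w : V) : Set V := insert w (K ∩ G.neighborSet w)
  have hmem {w : V} (hw : w ∈ t) : nbrClique w ∈ insert K (𝒞 ∪ t.image nbrClique) :=
    Finset.mem_insert_of_mem (Finset.mem_union_right _ (Finset.mem_image_of_mem _ hw))
  refine ⟨insert K (𝒞 ∪ t.image nbrClique), ⟨?_, ?_⟩, ?_⟩
  · simp only [Finset.forall_mem_insert, Finset.forall_mem_union, Finset.forall_mem_image]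
    exact ⟨hK, h𝒞.isClique, fun w _ => isClique_insert_inter_neighborSet hK w⟩
  · intro e
    induction e with
    | _ a b =>
    intro (hab : G.Adj a b) hs
    simp only [Sym2.coe_mk, Set.pair_subset_iff] at hs ⊢
    obtain ⟨ha | ha, hb | hb⟩ := hs
    · obtain ⟨L, hL, habL⟩ :=
        h𝒞.exists_superset s(a, b) hab (by simp [Set.pair_subset_iff, ha, hb])
      exact ⟨L, by simp [hL], by simpa [Set.pair_subset_iff] using habL⟩
    · exact ⟨nbrClique a, hmem ha, Set.mem_insert _ _, Set.mem_insert_of_mem _ ⟨hb, hab⟩⟩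
    · exact ⟨nbrClique b, hmem hb, Set.mem_insert_of_mem _ ⟨ha, hab.symm⟩, Set.mem_insert _ _⟩
    · exact ⟨K, Finset.mem_insert_self _ _, ha, hb⟩
  · calc (insert K (𝒞 ∪ t.image nbrClique)).card
        ≤ (𝒞 ∪ t.image nbrClique).card + 1 := Finset.card_insert_le _ _
      _ ≤ 𝒞.card + (t.image nbrClique).card + 1 := by gcongr; exact Finset.card_union_le _ _
      _ ≤ 𝒞.card + t.card + 1 := by gcongr; exact Finset.card_image_le

lemma add_two_sq_div_four (n : ℕ) : (n + 2) ^ 2 / 4 = n ^ 2 / 4 + n + 1 := by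
  rw [show (n + 2) ^ 2 = n ^ 2 + 4 * (n + 1) by ring]
  omega

theorem exists_isEdgeCliqueCover_card_le_sq_div_four (G : SimpleGraph V) (s : Finset V) :
    ∃ 𝒞, IsEdgeCliqueCover G s 𝒞 ∧ 𝒞.card ≤ s.card ^ 2 / 4 := by
  classical
  induction s using Finset.strongInduction with
  | H s ih =>
  by_cases hs : ∃ u ∈ s, ∃ v ∈ s, G.Adj u v
  · obtain ⟨u, hu, v, hv, huv⟩ := hs
    have hpair : {u, v} ⊆ s := Finset.insert_subset hu (Finset.singleton_subset_iff.2 hv)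
    have hcard : s.card = (s \ {u, v}).card + 2 := by
      rw [← Finset.card_pair huv.ne, Finset.card_sdiff_add_card_eq_card hpair]
    obtain ⟨𝒞, h𝒞, h𝒞card⟩ := ih (s \ {u, v}) (Finset.sdiff_ssubset hpair ⟨u, by simp⟩)
    obtain ⟨𝒟, h𝒟, h𝒟card⟩ := h𝒞.exists_union_of_isClique (isClique_pair.2 fun _ => huv)
    refine ⟨𝒟, ?_, ?_⟩
    · rwa [Finset.coe_sdiff, Finset.coe_pair,
        Set.sdiff_union_of_subset (Set.pair_subset hu hv)] at h𝒟
    · rw [hcard, add_two_sq_div_four]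
      omega
  · refine ⟨∅, ⟨by simp, fun e => ?_⟩, by simp⟩
    induction e with
    | _ a b =>
    intro (hab : G.Adj a b) hes
    exact absurd ⟨a, hes (by simp), b, hes (by simp), hab⟩ hs

end

theorem stmt_3 {V : Type*} [Fintype V] [DecidableEq V] (G : SimpleGraph V)
    [DecidableRel G.Adj] :
    ∃ c : Sym2 V → ℕ, IsVSRC G c ∧
      ∀ e ∈ G.edgeSet, c e < min (Fintype.card V ^ 2 / 4) G.edgeFinset.card := by
  obtain ⟨𝒞, h𝒞, hcard⟩ : ∃ 𝒞, IsEdgeCliqueCover G Set.univ 𝒞 ∧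
      𝒞.card ≤ min (Fintype.card V ^ 2 / 4) G.edgeFinset.card := by
    rcases min_choice (Fintype.card V ^ 2 / 4) G.edgeFinset.card with hmin | hmin <;> rw [hmin]
    · simpa using exists_isEdgeCliqueCover_card_le_sq_div_four G Finset.univ
    · exact exists_isEdgeCliqueCover_card_le_card_edgeFinset G
  obtain ⟨c, hc, hlt⟩ := h𝒞.exists_isVSRC
  exact ⟨c, hc, fun e he => (hlt e he).trans_le hcard⟩
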